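/- (Sign/Galois equivariance of Dirichlet L-values) For a primitive Dirichlet character χ and a positive integer k with χ(-1) = (-1)^k, and for any field automorphism σ of C, one has (L(k, χ) / ((πi)^k g(χ)))^σ = L(k, χ^σ) / ((πi)^k g(χ^σ)), where g(χ) = Σ_{a mod c} χ(a) e^{2πia/c} is the Gauss sum and χ^σ = σ ∘ χ. -/

import Mathlib

open scoped Real

/-!
Let `e(x) = exp (2πix)`. For `k ≥ 2`, and for `k = 1` with `x ∉ ℤ`, one has
`∑_{m ≠ 0} e(mx) / m ^ k = -(2πi) ^ k / k! * B_k({x})`. Mathlib has the absolutely convergent cases;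
for `k = 1` the value of the analytically continued series is read off from its Mellin transform,
which at `s = 1` is the integral of a logarithmic derivative.

Consequently `L(𝓕 Φ, k) / (πi) ^ k` is a rational linear combination of the values of `Φ` whenever
`Φ : ℤ/n → ℂ` has the parity of `k`, so that `σ` carries it to `L(𝓕 (σ ∘ Φ), k) / (πi) ^ k`. On the
other hand `σ` acts on `n`-th roots of unity as `ζ ↦ ζ ^ t` for a unit `t` mod `n`, hence
`𝓕 (σ ∘ Φ)` is `σ ∘ 𝓕 Φ` up to a dilation by `t`. Taking `𝓕 Φ = χ`, both `L(k, χ) / (πi) ^ k` and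
`g(χ)` are sent to `χ^σ(t)⁻¹` times their analogues for `χ^σ`, and the factor cancels in the
quotient.
-/

section PolylogKernel

open Complex Filter Topology Set Asymptotics MeasureTheory

/-- The function `t ↦ ∑_{m ≥ 1} z ^ m * exp (-m * t)` in closed form, whose Mellin transform is
`Γ(s)` times the polylogarithm `∑_{m ≥ 1} z ^ m / m ^ s`. -/
noncomputable def polylogKernel (z : ℂ) (t : ℝ) : ℂ :=
  z * rexp (-t) / (1 - z * rexp (-t))

variable {z : ℂ}

lemma one_sub_mem_slitPlane_of_norm_le_one {w : ℂ} (hw : ‖w‖ ≤ 1) (hw1 : w ≠ 1) :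
    1 - w ∈ slitPlane := by
  refine Or.inl ?_
  rw [sub_re, one_re, sub_pos]
  refine lt_of_le_of_ne ((re_le_norm w).trans hw) fun hre ↦ hw1 ?_
  have hnorm : w.re = ‖w‖ := le_antisymm (re_le_norm w) (hre ▸ hw)
  have him : 0 = w.im := (nonneg_iff.mp (re_eq_norm.mp hnorm)).2
  exact Complex.ext hre him.symm

lemma norm_mul_exp_neg_le (hz : ‖z‖ ≤ 1) (t : ℝ) : ‖z * rexp (-t)‖ ≤ rexp (-t) := by
  rw [norm_mul, norm_real, Real.norm_of_nonneg (Real.exp_nonneg _)]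
  exact mul_le_of_le_one_left (Real.exp_nonneg _) hz

lemma one_sub_mul_exp_neg_mem_slitPlane (hz : ‖z‖ ≤ 1) (hz1 : z ≠ 1) {t : ℝ} (ht : 0 ≤ t) :
    1 - z * rexp (-t) ∈ slitPlane := by
  have hnorm := norm_mul_exp_neg_le hz t
  refine one_sub_mem_slitPlane_of_norm_le_one (hnorm.trans (Real.exp_le_one_iff.mpr (by linarith)))
    fun h ↦ ?_
  have ht0 : t = 0 := by
    rw [h, norm_one, Real.one_le_exp_iff] at hnorm
    linarith
  exact hz1 (by simpa [ht0] using h)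

lemma continuousAt_polylogKernel (hz : ‖z‖ ≤ 1) (hz1 : z ≠ 1) {t : ℝ} (ht : 0 ≤ t) :
    ContinuousAt (polylogKernel z) t :=
  ContinuousAt.div (by fun_prop) (by fun_prop)
    (slitPlane_ne_zero (one_sub_mul_exp_neg_mem_slitPlane hz hz1 ht))

lemma tendsto_one_sub_mul_exp_neg_atTop (z : ℂ) :
    Tendsto (fun t : ℝ ↦ 1 - z * (rexp (-t) : ℂ)) atTop (𝓝 1) := by
  have hexp : Tendsto (fun t : ℝ ↦ (rexp (-t) : ℂ)) atTop (𝓝 0) :=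
    (continuous_ofReal.tendsto' 0 0 ofReal_zero).comp Real.tendsto_exp_neg_atTop_nhds_zero
  simpa using (hexp.const_mul z).const_sub 1

lemma polylogKernel_isBigO_atTop (z : ℂ) :
    polylogKernel z =O[atTop] fun t ↦ rexp (-1 * t) := by
  have hbdd : (fun t : ℝ ↦ z / (1 - z * (rexp (-t) : ℂ))) =O[atTop] fun _ ↦ (1 : ℝ) :=
    (tendsto_const_nhds.div (tendsto_one_sub_mul_exp_neg_atTop z) one_ne_zero).isBigO_one ℝ
  have hexp : (fun t : ℝ ↦ (rexp (-t) : ℂ)) =O[atTop] fun t ↦ rexp (-1 * t) :=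
    IsBigO.of_bound 1 (Eventually.of_forall fun t ↦ by simp [-ofReal_exp])
  refine (hbdd.mul hexp).congr (fun t ↦ ?_) fun t ↦ one_mul _
  rw [polylogKernel, div_mul_eq_mul_div]

lemma polylogKernel_isBigO_nhdsGT_zero (hz : ‖z‖ ≤ 1) (hz1 : z ≠ 1) :
    polylogKernel z =O[𝓝[>] 0] fun t : ℝ ↦ t ^ (-(0 : ℝ)) := by
  have hlim := (continuousAt_polylogKernel hz hz1 le_rfl).tendsto.mono_left
    (nhdsWithin_le_nhds (s := Ioi 0))
  simpa using hlim.isBigO_one ℝ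

lemma locallyIntegrableOn_polylogKernel (hz : ‖z‖ ≤ 1) (hz1 : z ≠ 1) :
    LocallyIntegrableOn (polylogKernel z) (Ioi 0) :=
  ContinuousOn.locallyIntegrableOn
    (fun _ ht ↦ (continuousAt_polylogKernel hz hz1 (le_of_lt ht)).continuousWithinAt)
    measurableSet_Ioi

lemma differentiableAt_mellin_polylogKernel (hz : ‖z‖ ≤ 1) (hz1 : z ≠ 1) {s : ℂ} (hs : 0 < s.re) :
    DifferentiableAt ℂ (mellin (polylogKernel z)) s :=
  mellin_differentiableAt_of_isBigO_rpow_exp one_pos (locallyIntegrableOn_polylogKernel hz hz1)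
    (polylogKernel_isBigO_atTop z) (polylogKernel_isBigO_nhdsGT_zero hz hz1) hs

lemma integrableOn_polylogKernel (hz : ‖z‖ ≤ 1) (hz1 : z ≠ 1) :
    IntegrableOn (polylogKernel z) (Ioi 0) := by
  have hconv : MellinConvergent (polylogKernel z) 1 :=
    mellinConvergent_of_isBigO_rpow_exp one_pos (locallyIntegrableOn_polylogKernel hz hz1)
      (polylogKernel_isBigO_atTop z) (polylogKernel_isBigO_nhdsGT_zero hz hz1) (by simp)
  simpa [MellinConvergent] using hconv

lemma hasDerivAt_log_one_sub_mul_exp_neg (hz : ‖z‖ ≤ 1) (hz1 : z ≠ 1) {t : ℝ} (ht : 0 ≤ t) :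
    HasDerivAt (fun t : ℝ ↦ log (1 - z * rexp (-t))) (polylogKernel z t) t := by
  have hexp : HasDerivAt (fun t : ℝ ↦ rexp (-t)) (-rexp (-t)) t := by
    simpa using (hasDerivAt_neg t).exp
  have hsub : HasDerivAt (fun t : ℝ ↦ 1 - z * (rexp (-t) : ℂ)) (z * rexp (-t)) t := by
    simpa [-ofReal_exp] using (hexp.ofReal_comp.const_mul z).const_sub 1
  exact hsub.clog_real (one_sub_mul_exp_neg_mem_slitPlane hz hz1 ht)

lemma mellin_polylogKernel_one (hz : ‖z‖ ≤ 1) (hz1 : z ≠ 1) :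
    mellin (polylogKernel z) 1 = -log (1 - z) := by
  have hlim : Tendsto (fun t : ℝ ↦ log (1 - z * rexp (-t))) atTop (𝓝 0) := by
    simpa using (tendsto_one_sub_mul_exp_neg_atTop z).clog one_mem_slitPlane
  calc mellin (polylogKernel z) 1
    _ = ∫ t in Ioi (0 : ℝ), polylogKernel z t := by simp [mellin]
    _ = 0 - log (1 - z * rexp (-0)) :=
      integral_Ioi_of_hasDerivAt_of_tendsto'
        (fun _ ht ↦ hasDerivAt_log_one_sub_mul_exp_neg hz hz1 ht)
        (integrableOn_polylogKernel hz hz1) hlim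
    _ = -log (1 - z) := by simp

lemma hasSum_polylogKernel (hz : ‖z‖ ≤ 1) {t : ℝ} (ht : 0 < t) :
    HasSum (fun m : ℕ ↦ z ^ (m + 1) * rexp (-((m + 1 : ℕ) : ℝ) * t)) (polylogKernel z t) := by
  have hnorm : ‖z * rexp (-t)‖ < 1 := (norm_mul_exp_neg_le hz t).trans_lt (by simpa using ht)
  have hgeom := (hasSum_geometric_of_norm_lt_one hnorm).mul_left (z * rexp (-t))
  rw [← div_eq_mul_inv] at hgeom
  refine hgeom.congr_fun fun m ↦ ?_
  have hexp : rexp (-((m + 1 : ℕ) : ℝ) * t) = rexp (-t) ^ (m + 1) := by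
    rw [← Real.exp_nat_mul]
    ring_nf
  rw [hexp, ofReal_pow]
  ring

lemma hasSum_mellin_polylogKernel (hz : ‖z‖ ≤ 1) {s : ℂ} (hs : 1 < s.re) :
    HasSum (fun m : ℕ ↦ Gamma s * z ^ (m + 1) / (((m + 1 : ℕ) : ℝ) : ℂ) ^ s)
      (mellin (polylogKernel z) s) := by
  refine hasSum_mellin (fun m ↦ Or.inr (by positivity)) (by linarith)
    (fun t ht ↦ hasSum_polylogKernel hz ht) ?_
  have hsum := (summable_nat_add_iff 1).mpr (Real.summable_one_div_nat_rpow.mpr hs)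
  refine hsum.of_nonneg_of_le (fun m ↦ by positivity) fun m ↦ ?_
  gcongr
  exact norm_pow z (m + 1) ▸ pow_le_one₀ (norm_nonneg z) hz

end PolylogKernel

section ExpZeta

open Complex HurwitzZeta Filter Topology Set
open scoped Nat ComplexConjugate

lemma mellin_polylogKernel_toCircle (a : UnitAddCircle) {s : ℂ} (hs : 1 < s.re) :
    mellin (polylogKernel a.toCircle) s = Gamma s * expZeta a s := by
  induction a using QuotientAddGroup.induction_on with
  | H x =>
  have hs0 : s ≠ 0 := ne_zero_of_one_lt_re hs
  have hseries :=
    ((hasSum_nat_add_iff' 1).mpr (hasSum_expZeta_of_one_lt_re x hs)).mul_left (Gamma s)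
  simp only [Finset.range_one, Finset.sum_singleton, Nat.cast_zero, zero_cpow hs0, div_zero,
    sub_zero] at hseries
  refine (hasSum_mellin_polylogKernel (Circle.norm_coe _).le hs).unique
    (hseries.congr_fun fun m ↦ ?_)
  rw [AddCircle.toCircle_apply_mk, Circle.coe_exp, ← Complex.exp_nat_mul, mul_div_assoc]
  push_cast
  ring_nf

theorem expZeta_one {a : UnitAddCircle} (ha : a ≠ 0) :
    expZeta a 1 = -log (1 - a.toCircle) := by
  have hz : ‖(a.toCircle : ℂ)‖ ≤ 1 := (Circle.norm_coe _).le
  have hz1 : (a.toCircle : ℂ) ≠ 1 := fun h ↦ ha <| AddCircle.injective_toCircle one_ne_zero <| by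
    rw [AddCircle.toCircle_zero, Circle.coe_eq_one.mp h]
  have hmellin : ContinuousAt (mellin (polylogKernel a.toCircle)) 1 :=
    (differentiableAt_mellin_polylogKernel hz hz1 (by simp)).continuousAt
  have hzeta : ContinuousAt (fun s ↦ Gamma s * expZeta a s) 1 :=
    (differentiableAt_Gamma_one.mul (differentiableAt_expZeta a 1 (Or.inr ha))).continuousAt
  have : (𝓝[{s : ℂ | 1 < s.re}] 1).NeBot := by
    rw [← mem_closure_iff_nhdsWithin_neBot, closure_setOfPred_lt_re]
    simp
  have heq : mellin (polylogKernel a.toCircle) 1 = Gamma 1 * expZeta a 1 :=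
    tendsto_nhds_unique_of_eventuallyEq (l := 𝓝[{s : ℂ | 1 < s.re}] 1)
      (hmellin.mono_left nhdsWithin_le_nhds)
      (hzeta.mono_left nhdsWithin_le_nhds)
      (eventually_nhdsWithin_of_forall fun _ hs ↦ mellin_polylogKernel_toCircle a hs)
  rw [← mellin_polylogKernel_one hz hz1, heq, Gamma_one, one_mul]

lemma one_sub_exp_mul_I (θ : ℝ) :
    1 - cexp (θ * I) = (2 * Real.sin (θ / 2) : ℝ) * cexp (((θ - π) / 2 : ℝ) * I) := by
  have hsq : cexp (θ * I) = cexp (θ / 2 * I) ^ 2 := by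
    rw [← Complex.exp_nat_mul]
    push_cast
    ring_nf
  have hshift : cexp (((θ - π) / 2 : ℝ) * I) = cexp (θ / 2 * I) * -I := by
    rw [← exp_neg_pi_div_two_mul_I, ← Complex.exp_add]
    push_cast
    ring_nf
  have hsin : (2 * Real.sin (θ / 2) : ℝ) = (cexp (-(θ / 2) * I) - cexp (θ / 2 * I)) * I := by
    push_cast
    rw [Complex.sin]
    ring
  have hinv : cexp (-(θ / 2) * I) * cexp (θ / 2 * I) = 1 := by
    rw [← Complex.exp_add]
    simp
  rw [hsq, hshift, hsin]
  linear_combination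
    (-1 : ℂ) * hinv + (cexp (-(θ / 2) * I) * cexp (θ / 2 * I) - cexp (θ / 2 * I) ^ 2) * I_sq

lemma arg_one_sub_exp_mul_I {θ : ℝ} (hθ : θ ∈ Ioo 0 (2 * π)) :
    arg (1 - cexp (θ * I)) = (θ - π) / 2 := by
  have hsin : 0 < 2 * Real.sin (θ / 2) :=
    mul_pos two_pos (Real.sin_pos_of_pos_of_lt_pi (by linarith [hθ.1]) (by linarith [hθ.2]))
  rw [one_sub_exp_mul_I, arg_real_mul _ hsin, arg_exp_mul_I, toIocMod_eq_self]
  constructor <;> linarith [hθ.1, hθ.2]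

lemma expZeta_one_sub_expZeta_neg_one {x : ℝ} (hx : x ∈ Ioo 0 1) :
    expZeta x 1 - expZeta (-x : UnitAddCircle) 1 = -(2 * π * I) * (x - 1 / 2) := by
  set a : UnitAddCircle := (x : UnitAddCircle) with ha_def
  have ha : a ≠ 0 := by
    rw [ha_def, Ne, AddCircle.coe_eq_zero_iff_of_mem_Ico ⟨hx.1.le, by simpa using hx.2⟩]
    exact hx.1.ne'
  have hθ : 2 * π * x ∈ Ioo 0 (2 * π) :=
    ⟨by have := hx.1; positivity, mul_lt_of_lt_one_right Real.two_pi_pos hx.2⟩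
  have harg : arg (1 - a.toCircle) = π * (x - 1 / 2) := by
    rw [ha_def, AddCircle.toCircle_apply_mk, div_one, Circle.coe_exp, arg_one_sub_exp_mul_I hθ]
    ring
  have hconj : log (1 - (-a).toCircle) = conj (log (1 - a.toCircle)) := by
    rw [← log_conj, map_sub, map_one, AddCircle.toCircle_neg, Circle.coe_inv_eq_conj]
    rw [harg]
    nlinarith [Real.pi_pos, hx.2]
  have him := sub_conj (log (1 - (a.toCircle : ℂ)))
  rw [log_im, harg] at him
  rw [expZeta_one ha, expZeta_one (neg_ne_zero.mpr ha), hconj]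
  push_cast at him
  linear_combination -him

theorem expZeta_add_neg_one_pow_mul_expZeta_neg {k : ℕ} (hk : k ≠ 0) {x : ℝ} (hx : x ∈ Ico 0 1)
    (h : k ≠ 1 ∨ x ≠ 0) :
    expZeta x k + (-1) ^ k * expZeta (-x : UnitAddCircle) k
      = -(2 * π * I) ^ k / k ! * bernoulliFun k x := by
  rcases eq_or_ne k 1 with rfl | hk1
  · have hx0 : 0 < x := lt_of_le_of_ne hx.1 (h.resolve_left (by simp)).symm
    simpa [sub_eq_add_neg] using expZeta_one_sub_expZeta_neg_one ⟨hx0, hx.2⟩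
  have hk2 : 2 ≤ k := by lia
  have hre : 1 < (k : ℂ).re := by rw [natCast_re]; exact Nat.one_lt_cast.mpr hk2
  have hsum := (hasSum_expZeta_of_one_lt_re x hre).add
    ((hasSum_expZeta_of_one_lt_re (-x) hre).mul_left ((-1) ^ k))
  rw [← AddCircle.coe_neg]
  refine hsum.unique ((hasSum_one_div_nat_pow_mul_fourier hk2 (Ico_subset_Icc_self hx)).congr_fun
    fun m ↦ ?_)
  rw [fourier_coe_apply, fourier_coe_apply, cpow_natCast]
  push_cast
  ring_nf

end ExpZeta

section LFunction

open Complex HurwitzZeta ZMod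
open scoped Nat

variable {n : ℕ} [NeZero n] {k : ℕ} {Φ : ZMod n → ℂ}

lemma expZeta_toAddCircle_add_neg_one_pow_mul_expZeta_neg (hk : k ≠ 0) (j : ZMod n)
    (h : k ≠ 1 ∨ j ≠ 0) :
    expZeta (toAddCircle j) k + (-1) ^ k * expZeta (toAddCircle (-j)) k
      = -(2 * π * I) ^ k / k ! * bernoulliFun k (j.val / n) := by
  have hn : (0 : ℝ) < n := Nat.cast_pos.mpr (NeZero.pos n)
  have hlt : (j.val / n : ℝ) < 1 := (div_lt_one hn).mpr (Nat.cast_lt.mpr (val_lt j))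
  rw [map_neg, toAddCircle_apply]
  refine expZeta_add_neg_one_pow_mul_expZeta_neg hk ⟨by positivity, hlt⟩ (h.imp_right fun hj ↦ ?_)
  exact div_ne_zero (Nat.cast_ne_zero.mpr (mt (val_eq_zero j).mp hj)) hn.ne'

theorem LFunction_dft_natCast (hk : k ≠ 0) (hΦ : ∀ j, Φ (-j) = (-1) ^ k * Φ j) :
    LFunction (𝓕 Φ) k
      = -(-(2 * π * I)) ^ k / (2 * k !) * ∑ j, Φ j * bernoulliFun k (j.val / n) := by
  have hk_or : Φ 0 = 0 ∨ k ≠ 1 := by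
    refine or_iff_not_imp_right.mpr fun hk1 ↦ ?_
    simpa [not_not.mp hk1, self_eq_neg] using hΦ 0
  have hsq : ((-1 : ℂ) ^ k) * (-1) ^ k = 1 := by rw [← mul_pow]; simp
  have hL : LFunction (𝓕 Φ) k = ∑ j, Φ j * expZeta (toAddCircle (-j)) k :=
    LFunction_dft Φ (hk_or.imp_right fun h ↦ mod_cast h)
  have hL' : LFunction (𝓕 Φ) k = (-1) ^ k * ∑ j, Φ j * expZeta (toAddCircle j) k := by
    rw [hL, ← Equiv.sum_comp (Equiv.neg (ZMod n)), Finset.mul_sum]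
    exact Finset.sum_congr rfl fun j _ ↦ by simp only [Equiv.neg_apply, hΦ, neg_neg, mul_assoc]
  have hterm (j : ZMod n) :
      Φ j * (expZeta (toAddCircle j) k + (-1) ^ k * expZeta (toAddCircle (-j)) k)
        = -(2 * π * I) ^ k / k ! * (Φ j * bernoulliFun k (j.val / n)) := by
    by_cases h : k ≠ 1 ∨ j ≠ 0
    · rw [expZeta_toAddCircle_add_neg_one_pow_mul_expZeta_neg hk j h]
      ring
    · simp only [not_or, not_not] at h
      simp [h.2, hk_or.resolve_right (not_not.mpr h.1)]
  have hsum : (-1) ^ k * (2 * LFunction (𝓕 Φ) k)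
      = -(2 * π * I) ^ k / k ! * ∑ j, Φ j * bernoulliFun k (j.val / n) :=
    calc (-1) ^ k * (2 * LFunction (𝓕 Φ) k)
      _ = (-1) ^ k * ((-1) ^ k * ∑ j, Φ j * expZeta (toAddCircle j) k)
          + (-1) ^ k * ∑ j, Φ j * expZeta (toAddCircle (-j)) k := by
        rw [← hL', ← hL]
        ring
      _ = ∑ j, Φ j * (expZeta (toAddCircle j) k + (-1) ^ k * expZeta (toAddCircle (-j)) k) := by
        rw [← mul_assoc, hsq, one_mul, Finset.mul_sum, ← Finset.sum_add_distrib]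
        exact Finset.sum_congr rfl fun j _ ↦ by ring
      _ = _ := by simp only [hterm, Finset.mul_sum]
  rw [neg_pow (2 * π * I : ℂ)]
  linear_combination ((-1) ^ k / 2 : ℂ) * hsum - LFunction (𝓕 Φ) k * hsq

lemma LFunction_const_mul (c : ℂ) (Φ : ZMod n → ℂ) (s : ℂ) :
    LFunction (fun j ↦ c * Φ j) s = c * LFunction Φ s := by
  simp only [LFunction, Finset.mul_sum, mul_assoc, mul_left_comm c]

end LFunction

section Galois

open Complex ZMod

lemma bernoulliFun_ratCast (k : ℕ) (q : ℚ) :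
    bernoulliFun k q = ((Polynomial.bernoulli k).eval q : ℚ) := by
  rw [bernoulliFun, Polynomial.eval_map]
  exact Polynomial.eval₂_at_apply (algebraMap ℚ ℝ) q

lemma isPrimitiveRoot_addChar_one {n : ℕ} {M : Type*} [CommMonoid M] {e : AddChar (ZMod n) M}
    (he : Function.Injective e) : IsPrimitiveRoot (e 1) n where
  pow_eq_one := by rw [← AddChar.map_nsmul_eq_pow]; simp
  dvd_of_pow_eq_one m hm := by
    rw [← AddChar.map_nsmul_eq_pow, nsmul_one, ← AddChar.map_zero_eq_one e] at hm
    exact (natCast_eq_zero_iff m n).mp (he hm)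

variable {n : ℕ} [NeZero n]

theorem exists_unit_map_addChar_eq {R : Type*} [CommRing R] [IsDomain R] {e : AddChar (ZMod n) R}
    (he : Function.Injective e) {f : R →+* R} (hf : Function.Injective f) :
    ∃ t : (ZMod n)ˣ, ∀ a, f (e a) = e (t * a) := by
  have hζ := isPrimitiveRoot_addChar_one he
  obtain ⟨i, -, hi, hpow⟩ := hζ.isPrimitiveRoot_iff.mp (hζ.map_of_injective hf)
  refine ⟨unitOfCoprime i hi, fun a ↦ ?_⟩
  have ha : e a = e 1 ^ a.val := by rw [← AddChar.map_nsmul_eq_pow]; simp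
  rw [coe_unitOfCoprime, ← nsmul_eq_mul, AddChar.map_nsmul_eq_pow, ha, map_pow, ← hpow,
    pow_right_comm]

lemma map_gaussSum_of_map_addChar {R R' : Type*} [CommRing R] [Fintype R] [CommRing R']
    (χ : MulChar R R') {e : AddChar R R'} {f : R' →+* R'} {t : Rˣ}
    (ht : ∀ a, f (e a) = e (t * a)) :
    f (gaussSum χ e) = (χ.ringHomComp f)⁻¹ t * gaussSum (χ.ringHomComp f) e := by
  rw [← gaussSum_mulShift_eq, gaussSum, map_sum, gaussSum]
  simp only [map_mul, ht, MulChar.ringHomComp_apply, AddChar.mulShift_apply]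

variable {k : ℕ} {Φ : ZMod n → ℂ} {σ : ℂ →+* ℂ} {t : (ZMod n)ˣ}

lemma map_dft (ht : ∀ a : ZMod n, σ (stdAddChar a) = stdAddChar (t.val * a)) (Φ : ZMod n → ℂ)
    (a : ZMod n) : σ (𝓕 Φ a) = 𝓕 (fun j ↦ σ (Φ j)) (t.val * a) := by
  simp only [dft_apply, smul_eq_mul, map_sum, map_mul, ht, mul_neg, mul_left_comm _ t.val]

theorem map_LFunction_dft_div (hk : k ≠ 0) (hΦ : ∀ j, Φ (-j) = (-1) ^ k * Φ j) :
    σ (LFunction (𝓕 Φ) k / (π * I) ^ k)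
      = LFunction (𝓕 (fun j ↦ σ (Φ j))) k / (π * I) ^ k := by
  have hσΦ (j : ZMod n) : σ (Φ (-j)) = (-1) ^ k * σ (Φ j) := by simp [hΦ]
  have hB (j : ZMod n) : (bernoulliFun k (j.val / n) : ℂ)
      = ((Polynomial.bernoulli k).eval (j.val / n : ℚ) : ℚ) := by
    have hq := bernoulliFun_ratCast k (j.val / n)
    simp only [Rat.cast_div, Rat.cast_natCast] at hq
    rw [hq, ofReal_ratCast]
  have hpi : ((π : ℂ) * I) ^ k ≠ 0 := by simp [Real.pi_ne_zero]
  have hrat (Ψ : ZMod n → ℂ) (hΨ : ∀ j, Ψ (-j) = (-1) ^ k * Ψ j) :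
      LFunction (𝓕 Ψ) k / (π * I) ^ k = -(-2) ^ k / (2 * k.factorial)
        * ∑ j, Ψ j * ((Polynomial.bernoulli k).eval (j.val / n : ℚ) : ℚ) := by
    rw [LFunction_dft_natCast hk hΨ, show -(2 * π * I) = -2 * (π * I) by ring, mul_pow,
      div_eq_iff hpi]
    simp only [hB]
    ring
  rw [hrat Φ hΦ, hrat _ hσΦ]
  simp only [map_mul, map_div₀, map_neg, map_pow, map_ofNat, map_natCast, map_sum, map_ratCast]

lemma invDFT_neg_of_parity (hΦ : ∀ j, Φ (-j) = (-1) ^ k * Φ j) (j : ZMod n) :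
    𝓕⁻ Φ (-j) = (-1) ^ k * 𝓕⁻ Φ j := by
  rw [invDFT_apply', invDFT_apply', ← congrFun (dft_comp_neg Φ), funext hΦ, dft_const_mul,
    smul_eq_mul, smul_eq_mul, mul_left_comm]

theorem map_LFunction_div (hk : k ≠ 0) (hΦ : ∀ j, Φ (-j) = (-1) ^ k * Φ j)
    (ht : ∀ a : ZMod n, σ (stdAddChar a) = stdAddChar (t.val * a)) :
    σ (LFunction Φ k / (π * I) ^ k)
      = LFunction (fun j ↦ σ (Φ (t⁻¹.val * j))) k / (π * I) ^ k := by
  have hdft : 𝓕 (fun j ↦ σ (𝓕⁻ Φ j)) = fun j ↦ σ (Φ (t⁻¹.val * j)) := by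
    ext j
    rw [← t.mul_inv_cancel_left j, ← map_dft ht, LinearEquiv.apply_symm_apply,
      t.mul_inv_cancel_left]
  rw [← hdft, ← map_LFunction_dft_div hk (invDFT_neg_of_parity hΦ), LinearEquiv.apply_symm_apply]

theorem map_dirichletLFunction_div {χ : DirichletCharacter ℂ n} (hk : k ≠ 0)
    (hpar : χ (-1) = (-1) ^ k) (ht : ∀ a : ZMod n, σ (stdAddChar a) = stdAddChar (t.val * a)) :
    σ (DirichletCharacter.LFunction χ k / (π * I) ^ k)
      = (χ.ringHomComp σ)⁻¹ t
        * (DirichletCharacter.LFunction (χ.ringHomComp σ) k / (π * I) ^ k) := by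
  have hχ (j : ZMod n) : χ (-j) = (-1) ^ k * χ j := by rw [← neg_one_mul, map_mul, hpar]
  have htwist (j : ZMod n) :
      σ (χ (t⁻¹.val * j)) = (χ.ringHomComp σ)⁻¹ t * (χ.ringHomComp σ) j := by
    rw [MulChar.inv_apply, Ring.inverse_unit, ← map_mul, MulChar.ringHomComp_apply]
  simp only [DirichletCharacter.LFunction]
  rw [map_LFunction_div hk hχ ht, ← mul_div_assoc, ← LFunction_const_mul]
  simp only [htwist]

lemma gaussSum_stdAddChar_eq_sum_exp (χ : DirichletCharacter ℂ n) :
    gaussSum χ stdAddChar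
      = ∑ a : ZMod n, χ a * cexp (2 * π * I * (a.val : ℂ) / (n : ℂ)) := by
  simp only [gaussSum, stdAddChar_apply, toCircle_apply]

theorem stmt14_general (χ : DirichletCharacter ℂ n) (hk : 1 ≤ k) (hpar : χ (-1) = (-1) ^ k)
    (σ : ℂ →+* ℂ) :
    σ (DirichletCharacter.LFunction χ k / ((π * I) ^ k * gaussSum χ stdAddChar))
      = DirichletCharacter.LFunction (χ.ringHomComp σ) k
          / ((π * I) ^ k * gaussSum (χ.ringHomComp σ) stdAddChar) := by
  obtain ⟨t, ht⟩ := exists_unit_map_addChar_eq (injective_stdAddChar (N := n)) σ.injective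
  have hfactor : (χ.ringHomComp σ)⁻¹ t ≠ 0 := (t.isUnit.map (χ.ringHomComp σ)⁻¹).ne_zero
  rw [← div_div, map_div₀, map_dirichletLFunction_div (by lia) hpar ht,
    map_gaussSum_of_map_addChar χ ht, mul_div_mul_left _ _ hfactor, div_div]

end Galois

/-- **Galois equivariance of Dirichlet L-values.** For a primitive
Dirichlet character `χ` and a positive integer `k` with `χ(-1) = (-1)^k`, and any field
automorphism `σ` of `ℂ`, one has
`σ(L(k,χ)/((πi)^k g(χ))) = L(k,χ^σ)/((πi)^k g(χ^σ))`, where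
`g(χ) = Σ_{a mod n} χ(a) e^{2πia/n}` is the Gauss sum and `χ^σ = σ ∘ χ`. -/
theorem stmt14 (n : ℕ) [NeZero n] (χ : DirichletCharacter ℂ n) (hχ : χ.IsPrimitive)
    (k : ℕ) (hk : 1 ≤ k) (hpar : χ (-1) = (-1) ^ k) (σ : ℂ ≃+* ℂ)
    (g : DirichletCharacter ℂ n → ℂ)
    (hg : ∀ ψ : DirichletCharacter ℂ n,
      g ψ = ∑ a : ZMod n, ψ a * Complex.exp (2 * π * Complex.I * (a.val : ℂ) / (n : ℂ))) :
    σ (DirichletCharacter.LFunction χ (k : ℂ) / (((π : ℂ) * Complex.I) ^ k * g χ))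
      = DirichletCharacter.LFunction (χ.ringHomComp σ.toRingHom) (k : ℂ)
          / (((π : ℂ) * Complex.I) ^ k * g (χ.ringHomComp σ.toRingHom)) := by
  rw [hg, hg, ← gaussSum_stdAddChar_eq_sum_exp, ← gaussSum_stdAddChar_eq_sum_exp]
  exact stmt14_general χ hk hpar σ.toRingHom
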